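/- arXiv:2302.13656 — 2 statements merged into one kernel-verified Lean document; each statement's English description precedes it below -/
import Mathlib

section
/- The rational distance d_rat fails Axiom A4': for X = {x,y,z} with x, y, z distinct, let C, C̃, C', C̃' be the quasi-choices mapping each singleton to itself, agreeing on pairs with value {x} on {x,y}, {x} on {x,z}, {y} on {y,z}, and with C(X)={x}, C̃(X)={x,y,z}, C'(X)={y,z}, C̃'(X)=∅. Then for S = {y,z} one has C(X) = C̃(X) Δ S and C'(X) = C̃'(X) Δ S, the four quasi-choices pairwise agree on every menu other than X, yet d_rat(C,C') = 8 while d_rat(C̃,C̃') = 6. -/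
/-!
Two quasi-choices that agree on every menu other than the whole set `X` have equal rational
localizations at every menu other than `X`, so only the localizations at `X` contribute to the
distance (`dRat_eq_sum_univ`). For a three-element `X` this leaves a sum over eight menus `B`.
For `C, C'` the two-element menus `{x, y}`, `{x, z}`, `{y, z}` and the menu `X` contribute
`2 + 2 + 1 + 3 = 8`; for `Ct, Ct'` they contribute `1 + 1 + 1 + 3 = 6`; the singletons and the
empty menu contribute nothing.
-/

/-- A quasi-choice over `X`: a map on menus with `C A ⊆ A` for every menu `A`. -/
def IsQuasiChoice {X : Type*} [DecidableEq X] (C : Finset X → Finset X) : Prop :=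
  ∀ A : Finset X, C A ⊆ A

/-- The rational localization `C_A` of a quasi-choice `C` at the menu `A`,
evaluated at `B ⊆ A`. -/
def ratLoc {X : Type*} [DecidableEq X] (C : Finset X → Finset X) (A B : Finset X) :
    Finset X :=
  if (C A ∩ B).Nonempty then C A ∩ B else C B

/-- The rational distance `d_rat` between two quasi-choices. -/
noncomputable def dRat {X : Type*} [Fintype X] [DecidableEq X]
    (C C' : Finset X → Finset X) : ℝ :=
  ∑ A ∈ Finset.univ.filter (fun A : Finset X => A ≠ ∅),
    ∑ B ∈ A.powerset, ((symmDiff (ratLoc C A B) (ratLoc C' A B)).card : ℝ)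

/-- If two maps agree off the full menu, only localizations at the full menu contribute to the
rational distance. -/
theorem dRat_eq_sum_univ {X : Type*} [Fintype X] [DecidableEq X] [Nonempty X]
    {C C' : Finset X → Finset X} (h : ∀ B, B ≠ Finset.univ → C B = C' B) :
    dRat C C' = ∑ B ∈ (Finset.univ : Finset X).powerset,
      ((symmDiff (ratLoc C Finset.univ B) (ratLoc C' Finset.univ B)).card : ℝ) := by
  unfold dRat
  refine Finset.sum_eq_single_of_mem Finset.univ
    (by simp [Finset.univ_nonempty.ne_empty]) fun A _ hA => ?_
  refine Finset.sum_eq_zero fun B hB => ?_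
  have hB' : B ≠ Finset.univ := by
    rintro rfl
    exact hA (Finset.univ_subset_iff.mp (Finset.mem_powerset.mp hB))
  simp [ratLoc, h A hA, h B hB']

theorem sum_powerset_triple {X : Type*} [DecidableEq X] {x y z : X}
    (hxy : x ≠ y) (hxz : x ≠ z) (hyz : y ≠ z) (f : Finset X → ℝ) :
    ∑ B ∈ ({x, y, z} : Finset X).powerset, f B =
      f ∅ + f {x} + f {y} + f {z} + f {x, y} + f {x, z} + f {y, z} + f {x, y, z} := by
  have hz : ({z} : Finset X).powerset = {∅, {z}} := by
    ext s; simp [Finset.subset_singleton_iff]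
  have hne : (∅ : Finset X) ≠ {z} := (Finset.singleton_ne_empty z).symm
  rw [Finset.sum_powerset_insert (by simp [hxy, hxz]),
    Finset.sum_powerset_insert (by simp [hyz]),
    Finset.sum_powerset_insert (by simp [hyz]), hz]
  simp only [Finset.sum_pair hne, insert_empty_eq]
  ring

theorem eq_of_subset_triple {X : Type*} [DecidableEq X] {x y z : X} {B : Finset X}
    (h : B ⊆ {x, y, z}) :
    B = ∅ ∨ B = {x} ∨ B = {y} ∨ B = {z} ∨ B = {x, y} ∨ B = {x, z} ∨ B = {y, z} ∨
      B = {x, y, z} := by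
  have h0 : B ∩ {x, y, z} = B := Finset.inter_eq_left.mpr h
  rw [← h0]
  by_cases hx : x ∈ B <;> by_cases hy : y ∈ B <;> by_cases hz : z ∈ B <;>
    simp [hx, hy, hz, Finset.inter_insert_of_mem, Finset.inter_insert_of_notMem]

/-- The rational distance `d_rat` fails Axiom A4': a concrete counterexample on a
three-element set, with translated menu `T = X` and translating set `S = {y,z}`. -/
theorem dRat_fails_A4' {X : Type*} [Fintype X] [DecidableEq X] (x y z : X)
    (hxy : x ≠ y) (hxz : x ≠ z) (hyz : y ≠ z)
    (huniv : (Finset.univ : Finset X) = {x, y, z})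
    (C Ct C' Ct' : Finset X → Finset X)
    (hC0 : C ∅ = ∅) (hCx : C {x} = {x}) (hCy : C {y} = {y}) (hCz : C {z} = {z})
    (hCxy : C {x, y} = {x}) (hCxz : C {x, z} = {x}) (hCyz : C {y, z} = {y})
    (hCt0 : Ct ∅ = ∅) (hCtx : Ct {x} = {x}) (hCty : Ct {y} = {y}) (hCtz : Ct {z} = {z})
    (hCtxy : Ct {x, y} = {x}) (hCtxz : Ct {x, z} = {x}) (hCtyz : Ct {y, z} = {y})
    (hC'0 : C' ∅ = ∅) (hC'x : C' {x} = {x}) (hC'y : C' {y} = {y}) (hC'z : C' {z} = {z})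
    (hC'xy : C' {x, y} = {x}) (hC'xz : C' {x, z} = {x}) (hC'yz : C' {y, z} = {y})
    (hCt'0 : Ct' ∅ = ∅) (hCt'x : Ct' {x} = {x}) (hCt'y : Ct' {y} = {y})
    (hCt'z : Ct' {z} = {z})
    (hCt'xy : Ct' {x, y} = {x}) (hCt'xz : Ct' {x, z} = {x}) (hCt'yz : Ct' {y, z} = {y})
    (hCX : C {x, y, z} = {x}) (hCtX : Ct {x, y, z} = {x, y, z})
    (hC'X : C' {x, y, z} = {y, z}) (hCt'X : Ct' {x, y, z} = ∅) :
    C {x, y, z} = symmDiff (Ct {x, y, z}) ({y, z} : Finset X) ∧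
    C' {x, y, z} = symmDiff (Ct' {x, y, z}) ({y, z} : Finset X) ∧
    (∀ B : Finset X, B ≠ {x, y, z} → C B = C' B ∧ C' B = Ct B ∧ Ct B = Ct' B) ∧
    dRat C C' = 8 ∧ dRat Ct Ct' = 6 := by
  have hyx := hxy.symm
  have hzx := hxz.symm
  have hzy := hyz.symm
  have : Nonempty X := ⟨x⟩
  have hagree : ∀ B : Finset X, B ≠ {x, y, z} → C B = C' B ∧ C' B = Ct B ∧ Ct B = Ct' B := by
    intro B hB
    rcases eq_of_subset_triple (huniv ▸ Finset.subset_univ B) with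
      rfl | rfl | rfl | rfl | rfl | rfl | rfl | rfl
    all_goals first | exact absurd rfl hB | simp [*]
  -- The symmetric differences that occur when the localizations at `X` are compared.
  have s1 : symmDiff ({x} : Finset X) {y} = {x, y} := by ext a; simp [Finset.mem_symmDiff]; grind
  have s2 : symmDiff ({x} : Finset X) {z} = {x, z} := by ext a; simp [Finset.mem_symmDiff]; grind
  have s3 : symmDiff ({y} : Finset X) {y, z} = {z} := by ext a; simp [Finset.mem_symmDiff]; grind
  have s4 : symmDiff ({x} : Finset X) {y, z} = {x, y, z} := by
    ext a; simp [Finset.mem_symmDiff]; grind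
  have s5 : symmDiff ({x, y} : Finset X) {x} = {y} := by ext a; simp [Finset.mem_symmDiff]; grind
  have s6 : symmDiff ({x, z} : Finset X) {x} = {z} := by ext a; simp [Finset.mem_symmDiff]; grind
  have s7 : symmDiff ({y, z} : Finset X) {y} = {z} := by ext a; simp [Finset.mem_symmDiff]; grind
  have s8 : symmDiff ({x, y, z} : Finset X) {y, z} = {x} := by
    ext a; simp [Finset.mem_symmDiff]; grind
  have s0 : ∀ s : Finset X, symmDiff s ∅ = s := fun s => symmDiff_bot s
  have c2 : ∀ {a b : X}, a ≠ b → (({a, b} : Finset X).card : ℝ) = 2 := fun h => by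
    exact_mod_cast Finset.card_pair h
  have c3 : (({x, y, z} : Finset X).card : ℝ) = 3 := by
    exact_mod_cast Finset.card_eq_three.mpr ⟨x, y, z, hxy, hxz, hyz, rfl⟩
  refine ⟨by rw [hCX, hCtX, s8], by rw [hC'X, hCt'X]; exact (bot_symmDiff _).symm, hagree, ?_, ?_⟩
  · rw [dRat_eq_sum_univ fun B hB => (hagree B (huniv ▸ hB)).1, huniv,
      sum_powerset_triple hxy hxz hyz]
    -- Here `C_X` sends `∅, x, y, z, xy, xz, yz, X` to `∅, x, y, z, x, x, y, x`.
    simp [ratLoc, *]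
    norm_num
  · rw [dRat_eq_sum_univ fun B hB => (hagree B (huniv ▸ hB)).2.2, huniv,
      sum_powerset_triple hxy hxz hyz]
    simp [ratLoc, *]
    norm_num
end

section
/- Let X = {x,y,z} with x, y, z distinct, and let c₂ be the quasi-choice over X mapping each singleton to itself and with c₂({x,y}) = {x}, c₂({x,z}) = {x}, c₂({y,z}) = {y}, c₂(X) = {y}. Then the minimum of d_rat(c₂, D) over all rationalizable quasi-choices D over X equals 2; that is, irr_{d_rat}(c₂) = 2. -/
/-- A quasi-choice is rationalizable if it is explained by the maximization of
some (arbitrary) binary relation. -/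
def Rationalizable {X : Type*} [DecidableEq X] (D : Finset X → Finset X) : Prop :=
  ∃ R : X → X → Prop, ∀ A : Finset X, A.Nonempty → ∀ x : X,
    (x ∈ D A ↔ x ∈ A ∧ ∀ a ∈ A, ¬ R a x)

/-- The contribution of the pair of menus `(A, B)` to `dRat C D`. -/
def dRatTerm {X : Type*} [DecidableEq X] (C D : Finset X → Finset X) (A B : Finset X) : ℕ :=
  (symmDiff (ratLoc C A B) (ratLoc D A B)).card

theorem dRat_eq_sigma {X : Type*} [Fintype X] [DecidableEq X] (C D : Finset X → Finset X) :
    dRat C D = ((∑ p ∈ (Finset.univ.filter (fun A : Finset X => A ≠ ∅)).sigma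
      (fun A => A.powerset), dRatTerm C D p.1 p.2 : ℕ) : ℝ) := by
  rw [Finset.sum_sigma]
  push_cast
  rfl

theorem one_term_le {X : Type*} [Fintype X] [DecidableEq X] (C D : Finset X → Finset X)
    {A B : Finset X} (hA : A ≠ ∅) (hB : B ⊆ A) (h : 2 ≤ dRatTerm C D A B) :
    (2 : ℝ) ≤ dRat C D := by
  rw [dRat_eq_sigma]
  have := Finset.single_le_sum (f := fun p : (_ : Finset X) × Finset X => dRatTerm C D p.1 p.2)
    (s := (Finset.univ.filter (fun A : Finset X => A ≠ ∅)).sigma (fun A => A.powerset))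
    (fun _ _ => Nat.zero_le _) (a := ⟨A, B⟩) (by simp [hA, hB])
  exact_mod_cast h.trans this

/-- Two distinct pairs of menus on which `C` and `D` differ force the distance to be at least `2`. -/
theorem two_terms_le {X : Type*} [Fintype X] [DecidableEq X] (C D : Finset X → Finset X)
    {A B A' B' : Finset X} (hA : A ≠ ∅) (hB : B ⊆ A) (hA' : A' ≠ ∅) (hB' : B' ⊆ A')
    (hne : ¬ (A = A' ∧ B = B')) (h : 1 ≤ dRatTerm C D A B) (h' : 1 ≤ dRatTerm C D A' B') :
    (2 : ℝ) ≤ dRat C D := by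
  rw [dRat_eq_sigma]
  have := Finset.sum_le_sum_of_subset
    (f := fun p : (_ : Finset X) × Finset X => dRatTerm C D p.1 p.2)
    (s := {⟨A, B⟩, ⟨A', B'⟩})
    (t := (Finset.univ.filter (fun A : Finset X => A ≠ ∅)).sigma (fun A => A.powerset))
    (by intro p hp
        simp only [Finset.mem_insert, Finset.mem_singleton] at hp
        rcases hp with rfl | rfl <;> simp [*])
  rw [Finset.sum_pair (by simpa using hne)] at this
  have h2 : 2 ≤ dRatTerm C D A B + dRatTerm C D A' B' := by omega
  exact_mod_cast h2.trans this

theorem one_le_dRatTerm {X : Type*} [DecidableEq X] {C D : Finset X → Finset X}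
    {A B : Finset X} (a : X) (h : ¬ (a ∈ ratLoc C A B ↔ a ∈ ratLoc D A B)) :
    1 ≤ dRatTerm C D A B := by
  refine Finset.card_pos.2 ⟨a, ?_⟩
  rw [Finset.mem_symmDiff]
  tauto

theorem ratLoc_self {X : Type*} [DecidableEq X] {C : Finset X → Finset X} {A : Finset X}
    (h : C A ⊆ A) : ratLoc C A A = C A := by
  simp [ratLoc, Finset.inter_eq_left.2 h]

/-- The choice function of the linear order `y > x > z` on `{x, y, z}`. -/
def yxzChoice {X : Type*} [DecidableEq X] (x y : X) (A : Finset X) : Finset X :=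
  if y ∈ A then {y} else if x ∈ A then {x} else A

/-- The `d_rat`-degree of irrationality of the choice `c₂` of Example 4.1 equals 2:
2 is the minimum of `d_rat(c₂, D)` over all rationalizable quasi-choices `D`. -/
theorem irr_dRat_c2 {X : Type*} [Fintype X] [DecidableEq X] (x y z : X)
    (hxy : x ≠ y) (hxz : x ≠ z) (hyz : y ≠ z)
    (huniv : (Finset.univ : Finset X) = {x, y, z})
    (c₂ : Finset X → Finset X)
    (h0 : c₂ ∅ = ∅) (hx : c₂ {x} = {x}) (hy : c₂ {y} = {y}) (hz : c₂ {z} = {z})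
    (hxy' : c₂ {x, y} = {x}) (hxz' : c₂ {x, z} = {x})
    (hyz' : c₂ {y, z} = {y}) (hX : c₂ {x, y, z} = {y}) :
    IsLeast {r : ℝ | ∃ D : Finset X → Finset X,
      IsQuasiChoice D ∧ Rationalizable D ∧ dRat c₂ D = r} 2 := by
  have hall : ∀ a : X, a = x ∨ a = y ∨ a = z := fun a => by
    have := Finset.mem_univ a
    rw [huniv] at this
    simpa using this
  -- `c₂` and the choice of the order `y > x > z` differ only at `{x, y}`; by inspection of all menus
  have hc : ∀ A, A ≠ {x, y} → c₂ A = yxzChoice x y A := by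
    intro A hA
    have hm : A = {x, y, z} ∨ A = {x, y} ∨ A = {x, z} ∨ A = {y, z} ∨ A = {x} ∨ A = {y} ∨
        A = {z} ∨ A = ∅ := by
      have hs : ∀ B : Finset X, (x ∈ A ↔ x ∈ B) → (y ∈ A ↔ y ∈ B) → (z ∈ A ↔ z ∈ B) → A = B := by
        intro B h1 h2 h3
        ext a
        rcases hall a with rfl | rfl | rfl <;> assumption
      by_cases h1 : x ∈ A <;> by_cases h2 : y ∈ A <;> by_cases h3 : z ∈ A
      · exact .inl (hs _ (by simp [*]) (by simp [*]) (by simp [*]))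
      · exact .inr (.inl (hs _ (by simp [*]) (by simp [*]) (by simp [h3, hxz.symm, hyz.symm])))
      · exact .inr (.inr (.inl (hs _ (by simp [*]) (by simp [h2, hxy.symm, hyz]) (by simp [*]))))
      · exact .inr (.inr (.inr (.inr (.inl (hs _ (by simp [*]) (by simp [h2, hxy.symm])
          (by simp [h3, hxz.symm]))))))
      · exact .inr (.inr (.inr (.inl (hs _ (by simp [*]) (by simp [*]) (by simp [*])))))
      · exact .inr (.inr (.inr (.inr (.inr (.inl (hs _ (by simp [*]) (by simp [*])
          (by simp [h3, hyz.symm])))))))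
      · exact .inr (.inr (.inr (.inr (.inr (.inr (.inl (hs _ (by simp [*]) (by simp [*])
          (by simp [*]))))))))
      · exact .inr (.inr (.inr (.inr (.inr (.inr (.inr (hs _ (by simp [*]) (by simp [*])
          (by simp [*]))))))))
    rcases hm with rfl | rfl | rfl | rfl | rfl | rfl | rfl | rfl
    · simp [yxzChoice, *]
    · exact absurd rfl hA
    · rw [hxz']; simp [yxzChoice, hxy.symm, hyz]
    · rw [hyz']; simp [yxzChoice]
    · rw [hx]; simp [yxzChoice, hxy.symm]
    · rw [hy]; simp [yxzChoice]
    · rw [hz]; simp [yxzChoice, hxz, hyz]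
    · rw [h0]; simp [yxzChoice]
  constructor
  · refine ⟨yxzChoice x y, ?_, ?_, ?_⟩
    · intro A
      unfold yxzChoice
      split_ifs <;> simp [*]
    · refine ⟨fun a b => (a = y ∧ b ≠ y) ∨ (a = x ∧ b = z), fun A _ b => ?_⟩
      unfold yxzChoice
      split_ifs with h1 h2
      · grind
      · have := hall b
        grind
      · grind
    · rw [dRat_eq_sigma]
      norm_cast
      rw [Finset.sum_eq_single ⟨{x, y}, {x, y}⟩]
      · simp only [dRatTerm]
        rw [ratLoc_self (by simp [hxy']), ratLoc_self (by simp [yxzChoice]), hxy']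
        have : symmDiff ({x} : Finset X) (yxzChoice x y {x, y}) = {x, y} := by
          ext a
          simp only [Finset.mem_symmDiff, yxzChoice]
          grind
        rw [this, Finset.card_pair hxy]
      · rintro ⟨A, B⟩ hm hne
        simp only [Finset.mem_sigma, Finset.mem_filter, Finset.mem_powerset] at hm
        obtain ⟨-, hB⟩ := hm
        suffices ratLoc c₂ A B = ratLoc (yxzChoice x y) A B by simp [dRatTerm, this]
        by_cases hA : A = {x, y}
        · subst hA
          have hB2 : B ≠ {x, y} := by rintro rfl; exact hne rfl
          simp only [ratLoc, hxy', hc B hB2]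
          ext a
          simp only [yxzChoice]
          grind
        · simp only [ratLoc, hc A hA]
          by_cases hB2 : B = {x, y}
          · -- `y ∈ B ⊆ A`, so localizing at `A` already selects `y` from `B`
            subst hB2
            have hyA : y ∈ A := hB (by simp)
            simp [yxzChoice, hyA]
          · rw [hc B hB2]
      · intro h
        simp at h
  · rintro r ⟨D, hD, ⟨R, hR⟩, rfl⟩
    have hself : ∀ A, ratLoc D A A = D A := fun A => ratLoc_self (hD A)
    have sxy : ratLoc c₂ {x, y} {x, y} = {x} := by rw [ratLoc_self (by simp [hxy']), hxy']
    have sxz : ratLoc c₂ {x, z} {x, z} = {x} := by rw [ratLoc_self (by simp [hxz']), hxz']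
    have sX : ratLoc c₂ {x, y, z} {x, y, z} = {y} := by rw [ratLoc_self (by simp [hX]), hX]
    have sXxy : ratLoc c₂ {x, y, z} {x, y} = {y} := by simp [ratLoc, hX]
    have Rxy := hR {x, y} (by simp)
    have Rxz := hR {x, z} (by simp)
    have RX := hR {x, y, z} (by simp)
    have nxz : ({x, y} : Finset X) ≠ {x, z} := fun h => by
      have : y ∈ ({x, z} : Finset X) := h ▸ (by simp)
      simp [hxy.symm, hyz] at this
    have nX : ({x, y} : Finset X) ≠ {x, y, z} := fun h => by
      have : z ∈ ({x, y} : Finset X) := h ▸ (by simp)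
      simp [hxz.symm, hyz.symm] at this
    by_cases h1 : y ∈ D {x, y}
    · have t1 : 1 ≤ dRatTerm c₂ D {x, y} {x, y} :=
        one_le_dRatTerm y (by rw [sxy, hself]; simp [h1, hxy.symm])
      by_cases h2 : x ∈ D {x, y}
      · by_cases h3 : R z x
        · refine two_terms_le c₂ D (A' := {x, z}) (B' := {x, z}) (by simp) subset_rfl (by simp)
            subset_rfl (fun h => nxz h.1) t1 (one_le_dRatTerm x ?_)
          rw [sxz, hself, Rxz]
          simp [h3]
        · refine two_terms_le c₂ D (A' := {x, y, z}) (B' := {x, y, z}) (by simp) subset_rfl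
            (by simp) subset_rfl (fun h => nX h.1) t1 (one_le_dRatTerm x ?_)
          rw [sX, hself, RX]
          have hx2 := ((Rxy x).1 h2).2
          have hxx := hx2 x (by simp)
          have hyx := hx2 y (by simp)
          simp [h3, hxx, hyx, hxy]
      · refine one_term_le c₂ D (A := {x, y}) (B := {x, y}) (by simp) subset_rfl ?_
        rw [← Finset.card_pair hxy]
        refine Finset.card_le_card ?_
        rw [sxy, hself]
        intro a ha
        rw [Finset.mem_symmDiff]
        simp only [Finset.mem_insert, Finset.mem_singleton] at ha ⊢
        rcases ha with rfl | rfl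
        · exact .inl ⟨rfl, h2⟩
        · exact .inr ⟨h1, hxy.symm⟩
    · have h2 : y ∉ D {x, y, z} := fun h => h1 <| (Rxy y).2
        ⟨by simp, fun a ha => ((RX y).1 h).2 a (by simp at ha ⊢; tauto)⟩
      refine two_terms_le c₂ D (A := {x, y, z}) (B := {x, y, z}) (A' := {x, y, z}) (B' := {x, y})
        (by simp) subset_rfl (by simp) (by intro a; simp; tauto) (fun h => nX h.2.symm)
        (one_le_dRatTerm y ?_) (one_le_dRatTerm y ?_)
      · rw [sX, hself]
        simp [h2]
      · rw [sXxy]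
        unfold ratLoc
        split_ifs <;> simp [h1, h2]
end
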